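/- Let $F$ (firms) and $W$ (workers) be finite disjoint sets, $A=(a_{ij})_{(i,j)\in F\times W}$ a matrix of nonnegative reals, and $r_i\ge 0$ ($i\in F$) integer capacities. Assume that a firm that cannot hire generates no income, i.e. $a_{ij}=0$ for all $j\in W$ whenever $r_i=0$ (so there is no restriction if all capacities are positive). For $S\subseteq F$ and $T\subseteq W$ let $v_\gamma(S\cup T)$ be the maximum of $\sum_{(i,j)\in\mu}a_{ij}$ over all $\mu\subseteq S\times T$ in which each $i\in S$ appears in at most $r_i$ pairs and each $j\in T$ in at most one pair. Then the many-to-one assignment game $v_\gamma$ on $N=F\cup W$ associated with the market $\gamma=(F,W,A,r)$ is convex, i.e. $v_\gamma(S\cup\{k\})-v_\gamma(S)\le v_\gamma(T\cup\{k\})-v_\gamma(T)$ for all $k\in N$ and $S\subseteq T\subseteq N\setminus\{k\}$, if and only if no row or column of $A$ contains more positive entries than the capacity of the corresponding agent, i.e., for each firm $i\in F$ the number of workers $j$ with $a_{ij}>0$ is at most $r_i$, and for each worker $j\in W$ the number of firms $i$ with $a_{ij}>0$ is at most $1$. -/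

import Mathlib

/-- `μ` is a matching between the firms in `S` and the workers in `T`: its pairs lie in `S × T`,
each firm `i` appears in at most `r i` pairs and each worker in at most one pair. -/
def IsMatching {F W : Type*} [DecidableEq F] [DecidableEq W] (r : F → ℕ)
    (S : Finset F) (T : Finset W) (μ : Finset (F × W)) : Prop :=
  μ ⊆ S ×ˢ T ∧
  (∀ i ∈ S, (μ.filter fun p => p.1 = i).card ≤ r i) ∧
  (∀ j ∈ T, (μ.filter fun p => p.2 = j).card ≤ 1)

theorem isMatching_empty {F W : Type*} [DecidableEq F] [DecidableEq W] (r : F → ℕ)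
    (S : Finset F) (T : Finset W) : IsMatching r S T (∅ : Finset (F × W)) := by
  simp [IsMatching]

open scoped Classical in
/-- The (finite) set of matchings between the firms in `S` and the workers in `T`. -/
noncomputable def matchings {F W : Type*} [DecidableEq F] [DecidableEq W] (r : F → ℕ)
    (S : Finset F) (T : Finset W) : Finset (Finset (F × W)) :=
  (S ×ˢ T).powerset.filter fun μ => IsMatching r S T μ

theorem matchings_nonempty {F W : Type*} [DecidableEq F] [DecidableEq W] (r : F → ℕ)
    (S : Finset F) (T : Finset W) : (matchings r S T).Nonempty :=
  ⟨∅, by simp [matchings, isMatching_empty]⟩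

/-- The coalitional function of the many-to-one assignment game with player set `F ⊕ W`: the
worth of a coalition is the maximum value of a matching between its firms and its workers. -/
noncomputable def gameValue {F W : Type*} [DecidableEq F] [DecidableEq W]
    (A : Matrix F W ℝ) (r : F → ℕ) (C : Finset (F ⊕ W)) : ℝ :=
  (matchings r C.toLeft C.toRight).sup' (matchings_nonempty r C.toLeft C.toRight)
    fun μ => ∑ p ∈ μ, A p.1 p.2

/-- A coalitional game is convex if the marginal contribution of every player is monotone in
the coalition that the player joins. -/
def IsConvexGame {N : Type*} [DecidableEq N] (v : Finset N → ℝ) : Prop :=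
  ∀ (k : N) (S T : Finset N), S ⊆ T → k ∉ T →
    v (insert k S) - v S ≤ v (insert k T) - v T

section AssignmentGame

variable {F W : Type*} [DecidableEq F] [DecidableEq W] {A : Matrix F W ℝ} {r : F → ℕ}

theorem mem_matchings {S : Finset F} {T : Finset W} {μ : Finset (F × W)} :
    μ ∈ matchings r S T ↔ IsMatching r S T μ := by
  simp only [matchings, Finset.mem_filter, Finset.mem_powerset, and_iff_right_iff_imp]
  exact fun h => h.1

theorem IsMatching.sum_le_gameValue {C : Finset (F ⊕ W)} {μ : Finset (F × W)}
    (h : IsMatching r C.toLeft C.toRight μ) :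
    ∑ p ∈ μ, A p.1 p.2 ≤ gameValue A r C :=
  Finset.le_sup' (fun μ : Finset (F × W) => ∑ p ∈ μ, A p.1 p.2) (mem_matchings.2 h)

theorem exists_isMatching_gameValue_eq (A : Matrix F W ℝ) (r : F → ℕ) (C : Finset (F ⊕ W)) :
    ∃ μ, IsMatching r C.toLeft C.toRight μ ∧ gameValue A r C = ∑ p ∈ μ, A p.1 p.2 := by
  obtain ⟨μ, hμ, h⟩ := Finset.exists_mem_eq_sup' (matchings_nonempty r C.toLeft C.toRight)
    fun μ : Finset (F × W) => ∑ p ∈ μ, A p.1 p.2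
  exact ⟨μ, mem_matchings.1 hμ, h⟩

/-- The worth of a coalition is at most the sum of all entries of its submatrix. -/
theorem gameValue_le_sum (hA : ∀ i j, 0 ≤ A i j) (C : Finset (F ⊕ W)) :
    gameValue A r C ≤ ∑ p ∈ C.toLeft ×ˢ C.toRight, A p.1 p.2 := by
  obtain ⟨μ, hμ, h⟩ := exists_isMatching_gameValue_eq A r C
  rw [h]
  exact Finset.sum_le_sum_of_subset_of_nonneg hμ.1 fun p _ _ => hA p.1 p.2

theorem le_gameValue_pair (hr : ∀ i, r i = 0 → ∀ j, A i j = 0) (i : F) (j : W) :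
    A i j ≤ gameValue A r (Finset.disjSum {i} {j}) := by
  by_cases hi : r i = 0
  · rw [hr i hi j]
    simpa using (isMatching_empty r _ _).sum_le_gameValue (A := A) (C := Finset.disjSum {i} {j})
  · have h : IsMatching r (Finset.disjSum {i} {j}).toLeft (Finset.disjSum {i} {j}).toRight
        {(i, j)} := by
      refine ⟨by simp, fun k _ => ?_, fun k _ => ?_⟩
      · have hk : k = i := by simp_all
        subst hk
        exact (Finset.card_filter_le _ _).trans (by simpa using Nat.one_le_iff_ne_zero.2 hi)
      · exact (Finset.card_filter_le _ _).trans (by simp)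
    simpa using h.sum_le_gameValue (A := A)

theorem Finset.insert_inl_disjSum (i : F) (S : Finset F) (T : Finset W) :
    insert (Sum.inl i) (S.disjSum T) = (insert i S).disjSum T := by
  ext (x | x) <;> simp

theorem Finset.insert_inr_disjSum (j : W) (S : Finset F) (T : Finset W) :
    insert (Sum.inr j) (S.disjSum T) = S.disjSum (insert j T) := by
  ext (x | x) <;> simp

theorem sum_row_le_gameValue (hA : ∀ i j, 0 ≤ A i j) (hr : ∀ i, r i = 0 → ∀ j, A i j = 0)
    (hv : IsConvexGame (gameValue A r)) (i : F) (T : Finset W) :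
    ∑ j ∈ T, A i j ≤ gameValue A r (Finset.disjSum {i} T) := by
  induction T using Finset.induction_on with
  | empty =>
    simpa using (isMatching_empty r _ _).sum_le_gameValue (A := A) (C := Finset.disjSum {i} ∅)
  | insert j T hj ih =>
    have h := hv (Sum.inr j) (Finset.disjSum {i} ∅) (Finset.disjSum {i} T)
      (Finset.disjSum_mono subset_rfl (Finset.empty_subset T)) (by simpa using hj)
    rw [Finset.insert_inr_disjSum, Finset.insert_inr_disjSum, insert_empty_eq] at h
    have h₀ : gameValue A r (Finset.disjSum {i} ∅) ≤ 0 := by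
      simpa only [Finset.toRight_disjSum, Finset.product_empty, Finset.sum_empty] using
        gameValue_le_sum (r := r) hA (Finset.disjSum {i} ∅)
    rw [Finset.sum_insert hj]
    linarith [le_gameValue_pair hr i j]

/-- In a convex assignment game every coalition realizes all entries of its submatrix. -/
theorem IsConvexGame.sum_le_gameValue (hA : ∀ i j, 0 ≤ A i j)
    (hr : ∀ i, r i = 0 → ∀ j, A i j = 0) (hv : IsConvexGame (gameValue A r))
    (S : Finset F) (T : Finset W) :
    ∑ i ∈ S, ∑ j ∈ T, A i j ≤ gameValue A r (S.disjSum T) := by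
  induction S using Finset.induction_on with
  | empty =>
    simpa using (isMatching_empty r _ _).sum_le_gameValue (A := A) (C := Finset.disjSum ∅ T)
  | insert i S hi ih =>
    have h := hv (Sum.inl i) (Finset.disjSum ∅ T) (Finset.disjSum S T)
      (Finset.disjSum_mono (Finset.empty_subset S) subset_rfl) (by simpa using hi)
    rw [Finset.insert_inl_disjSum, Finset.insert_inl_disjSum, insert_empty_eq] at h
    have h₀ : gameValue A r (Finset.disjSum ∅ T) ≤ 0 := by
      simpa only [Finset.toLeft_disjSum, Finset.empty_product, Finset.sum_empty] using
        gameValue_le_sum (r := r) hA (Finset.disjSum ∅ T)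
    rw [Finset.sum_insert hi]
    linarith [sum_row_le_gameValue hA hr hv i T]

/-- In a convex assignment game some matching contains all positive entries. -/
theorem IsConvexGame.exists_isMatching_pos_mem [Fintype F] [Fintype W] (hA : ∀ i j, 0 ≤ A i j)
    (hr : ∀ i, r i = 0 → ∀ j, A i j = 0) (hv : IsConvexGame (gameValue A r)) :
    ∃ μ, IsMatching r Finset.univ Finset.univ μ ∧ ∀ i j, 0 < A i j → (i, j) ∈ μ := by
  obtain ⟨μ, hμ, h⟩ := exists_isMatching_gameValue_eq A r (Finset.disjSum Finset.univ Finset.univ)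
  rw [Finset.toLeft_disjSum, Finset.toRight_disjSum] at hμ
  refine ⟨μ, hμ, fun i j hij => ?_⟩
  by_contra hn
  have hlt : ∑ p ∈ μ, A p.1 p.2 < ∑ p ∈ Finset.univ ×ˢ Finset.univ, A p.1 p.2 :=
    Finset.sum_lt_sum_of_subset hμ.1 (i := (i, j)) (by simp) hn hij fun p _ _ => hA p.1 p.2
  have hge := hv.sum_le_gameValue hA hr Finset.univ Finset.univ
  rw [h] at hge
  exact hlt.not_ge ((Finset.sum_product _ _ _).trans_le hge)

theorem IsMatching.card_pos_row_le [Fintype F] [Fintype W] {μ : Finset (F × W)}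
    (hμ : IsMatching r Finset.univ Finset.univ μ) (hpos : ∀ i j, 0 < A i j → (i, j) ∈ μ) (i : F) :
    (Finset.univ.filter fun j : W => 0 < A i j).card ≤ r i := by
  refine le_trans ?_ (hμ.2.1 i (Finset.mem_univ i))
  refine Finset.card_le_card_of_injOn (fun j => (i, j)) (fun j hj => ?_) fun j _ k _ h => ?_
  · simpa using hpos i j (by simpa using hj)
  · simpa using h

theorem IsMatching.card_pos_column_le [Fintype F] [Fintype W] {μ : Finset (F × W)}
    (hμ : IsMatching r Finset.univ Finset.univ μ) (hpos : ∀ i j, 0 < A i j → (i, j) ∈ μ) (j : W) :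
    (Finset.univ.filter fun i : F => 0 < A i j).card ≤ 1 := by
  refine le_trans ?_ (hμ.2.2 j (Finset.mem_univ j))
  refine Finset.card_le_card_of_injOn (fun i => (i, j)) (fun i hi => ?_) fun i _ k _ h => ?_
  · simpa using hpos i j (by simpa using hi)
  · simpa using h

/-- If no row or column has more positive entries than the capacity of its agent, then every
coalition realizes all entries of its submatrix. -/
theorem gameValue_eq_sum [Fintype F] [Fintype W] (hA : ∀ i j, 0 ≤ A i j)
    (hrow : ∀ i : F, (Finset.univ.filter fun j : W => 0 < A i j).card ≤ r i)
    (hcol : ∀ j : W, (Finset.univ.filter fun i : F => 0 < A i j).card ≤ 1)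
    (C : Finset (F ⊕ W)) :
    gameValue A r C = ∑ i ∈ C.toLeft, ∑ j ∈ C.toRight, A i j := by
  refine Eq.trans ((gameValue_le_sum hA C).antisymm ?_) (Finset.sum_product _ _ _)
  have h : IsMatching r C.toLeft C.toRight
      ((C.toLeft ×ˢ C.toRight).filter fun p => 0 < A p.1 p.2) := by
    refine ⟨Finset.filter_subset _ _, fun i _ => ?_, fun j _ => ?_⟩
    · refine (Finset.card_le_card_of_injOn Prod.snd ?_ ?_).trans (hrow i)
      · rintro ⟨a, b⟩ h
        simp only [Finset.coe_filter, Finset.mem_filter, Set.mem_ofPred_eq] at h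
        obtain ⟨⟨_, h⟩, rfl⟩ := h
        simpa using h
      · rintro ⟨a, b⟩ h ⟨c, d⟩ h' hbd
        simp_all
    · refine (Finset.card_le_card_of_injOn Prod.fst ?_ ?_).trans (hcol j)
      · rintro ⟨a, b⟩ h
        simp only [Finset.coe_filter, Finset.mem_filter, Set.mem_ofPred_eq] at h
        obtain ⟨⟨_, h⟩, rfl⟩ := h
        simpa using h
      · rintro ⟨a, b⟩ h ⟨c, d⟩ h' hbd
        simp_all
  refine le_trans (le_of_eq ?_) h.sum_le_gameValue
  refine (Finset.sum_filter_of_ne fun p _ hp => ?_).symm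
  exact (hA p.1 p.2).lt_of_ne hp.symm

/-- The game in which every coalition realizes all entries of its submatrix is convex. -/
theorem isConvexGame_sum (hA : ∀ i j, 0 ≤ A i j) :
    IsConvexGame fun C : Finset (F ⊕ W) => ∑ i ∈ C.toLeft, ∑ j ∈ C.toRight, A i j := by
  intro k S T hST hk
  have hk' : k ∉ S := fun h => hk (hST h)
  rcases k with i | j
  · simp only [Finset.toLeft_insert_inl, Finset.toRight_insert_inl]
    rw [Finset.sum_insert (by simpa using hk'), Finset.sum_insert (by simpa using hk),
      add_sub_cancel_right, add_sub_cancel_right]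
    exact Finset.sum_le_sum_of_subset_of_nonneg (Finset.toRight_subset_toRight hST)
      fun j _ _ => hA i j
  · simp only [Finset.toLeft_insert_inr, Finset.toRight_insert_inr]
    simp only [Finset.sum_insert (show j ∉ T.toRight by simpa using hk),
      Finset.sum_insert (show j ∉ S.toRight by simpa using hk'), Finset.sum_add_distrib,
      add_sub_cancel_right]
    exact Finset.sum_le_sum_of_subset_of_nonneg (Finset.toLeft_subset_toLeft hST)
      fun i _ _ => hA i j

end AssignmentGame

theorem convex_iff_few_positive_entries {F W : Type*} [Fintype F] [Fintype W]
    [DecidableEq F] [DecidableEq W] (A : Matrix F W ℝ) (r : F → ℕ)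
    (hA : ∀ i j, 0 ≤ A i j)
    (hr : ∀ i, r i = 0 → ∀ j, A i j = 0) :
    IsConvexGame (gameValue A r) ↔
      (∀ i : F, (Finset.univ.filter fun j : W => 0 < A i j).card ≤ r i) ∧
      (∀ j : W, (Finset.univ.filter fun i : F => 0 < A i j).card ≤ 1) := by
  constructor
  · intro hv
    obtain ⟨μ, hμ, hpos⟩ := hv.exists_isMatching_pos_mem hA hr
    exact ⟨hμ.card_pos_row_le hpos, hμ.card_pos_column_le hpos⟩
  · rintro ⟨hrow, hcol⟩
    rw [funext (gameValue_eq_sum hA hrow hcol)]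
    exact isConvexGame_sum hA
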